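/- With the same setup as in the Lyapunov decrease lemma and assuming E: V → ℝ is convex and lower semicontinuous with closed subgradient graph, every limit point (u^∞, λ^∞) of the sequence (u⁽ⁿ⁾, λ⁽ⁿ⁾) generated by the decoupled augmented Lagrangian method satisfies (I − P)u^∞ = 0 and 0 ∈ ∂E(u^∞) + (I − P)λ^∞, i.e. (u^∞, λ^∞) is a critical point of the saddle point problem; moreover the whole sequence converges to this critical point. -/

import Mathlib

/-!
The optimality condition of each minimisation step reads
`-(λ⁽ⁿ⁾ + η (u⁽ⁿ⁺¹⁾ - P u⁽ⁿ⁾)) ∈ ∂E(u⁽ⁿ⁺¹⁾)` (`subgradient_of_argmin`). All multipliers lie in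
`range (I - P) = ker P`, and by monotonicity of `∂E` every critical point `(a, m)` with `P a = a`,
`P m = 0` and `-m ∈ ∂E(a)` makes
`Φₙ = ‖λ⁽ⁿ⁾ - m‖² + η² ‖P u⁽ⁿ⁾ - a‖²` decrease by at least
`‖η (I - P) u⁽ⁿ⁺¹⁾‖² + η² ‖P u⁽ⁿ⁺¹⁾ - P u⁽ⁿ⁾‖²` (`lyapunov_step`).

Applied to the given saddle point, with `m = (I - P) λ*`, this shows `(I - P) u⁽ⁿ⁾ → 0` and
`P u⁽ⁿ⁺¹⁾ - P u⁽ⁿ⁾ → 0`, so passing to the limit in the optimality condition along a subsequence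
shows that each limit point is critical. Applied to a limit point itself, it gives a
nonincreasing `Φₙ` that tends to `0` along a subsequence, hence along the whole sequence.
-/

open scoped RealInnerProductSpace
open Filter Topology

lemma tendsto_zero_of_norm_sq_le {V : Type*} [NormedAddCommGroup V] {f : ℕ → V} {g : ℕ → ℝ}
    (hg : Tendsto g atTop (𝓝 0)) (h : ∀ n, ‖f n‖ ^ 2 ≤ g n) : Tendsto f atTop (𝓝 0) := by
  refine squeeze_zero_norm (a := fun n => √(g n)) (fun n => Real.le_sqrt_of_sq_le (h n)) ?_
  simpa using hg.sqrt

/-- First-order optimality for the proximal-type subproblem; it follows by comparing the minimiser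
`x` with `x + t (v - x)` and letting `t → 0⁺`. -/
lemma subgradient_of_argmin {V : Type*} [NormedAddCommGroup V] [InnerProductSpace ℝ V]
    {E : V → ℝ} (hE : ConvexOn ℝ Set.univ E) {η : ℝ} {l p x : V}
    (hx : ∀ v : V, E x + ⟪x, l⟫ + η / 2 * ‖x - p‖ ^ 2 ≤ E v + ⟪v, l⟫ + η / 2 * ‖v - p‖ ^ 2)
    (v : V) : E x + ⟪-(l + η • (x - p)), v - x⟫ ≤ E v := by
  have key : ∀ t ∈ Set.Ioo (0 : ℝ) 1,
      0 ≤ E v - E x + ⟪v - x, l⟫ + η * ⟪v - x, x - p⟫ + t * (η / 2 * ‖v - x‖ ^ 2) := by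
    rintro t ⟨ht0, ht1⟩
    have h1 := hE.2 (Set.mem_univ x) (Set.mem_univ v) (sub_nonneg.2 ht1.le) ht0.le (by ring)
    have h2 := hx ((1 - t) • x + t • v)
    have e1 : (1 - t) • x + t • v = x + t • (v - x) := by module
    have e2 : x + t • (v - x) - p = t • (v - x) + (x - p) := by module
    rw [e1] at h1 h2
    rw [e2, norm_add_sq_real, inner_add_left, inner_smul_left, inner_smul_left, norm_smul,
      mul_pow, Real.norm_eq_abs, sq_abs] at h2
    simp only [smul_eq_mul, conj_trivial] at h1 h2
    refine nonneg_of_mul_nonneg_right (a := t) ?_ ht0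
    nlinarith
  have hlim : Tendsto (fun t : ℝ =>
      E v - E x + ⟪v - x, l⟫ + η * ⟪v - x, x - p⟫ + t * (η / 2 * ‖v - x‖ ^ 2)) (𝓝[>] 0)
      (𝓝 (E v - E x + ⟪v - x, l⟫ + η * ⟪v - x, x - p⟫ + 0 * (η / 2 * ‖v - x‖ ^ 2))) :=
    (Continuous.tendsto (by fun_prop) 0).mono_left nhdsWithin_le_nhds
  have h := ge_of_tendsto hlim
    (Filter.eventually_of_mem (Ioo_mem_nhdsGT (zero_lt_one' ℝ)) key)
  rw [inner_neg_left, inner_add_left, inner_smul_left, real_inner_comm (v - x) l,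
    real_inner_comm (v - x) (x - p)]
  simp only [conj_trivial]
  linarith

/-- The Lyapunov decrease in coordinates: `p = P u⁽ⁿ⁺¹⁾`, `q = (I - P) u⁽ⁿ⁺¹⁾`, `y = P u⁽ⁿ⁾`, and
`hmono` is the monotonicity of `∂E` between `u⁽ⁿ⁺¹⁾` and the critical point `(a, m)`. -/
lemma lyapunov_step {V : Type*} [NormedAddCommGroup V] [InnerProductSpace ℝ V]
    {η : ℝ} (hη : 0 < η) {l m p q y a : V}
    (h1 : ⟪l - m, p - a⟫ = 0) (h2 : ⟪q, p - a⟫ = 0) (h3 : ⟪p - y, q⟫ = 0)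
    (hmono : ⟪(l - m) + η • (q + (p - y)), q + (p - a)⟫ ≤ 0) :
    ‖l + η • q - m‖ ^ 2 + η ^ 2 * ‖p - a‖ ^ 2 + (‖η • q‖ ^ 2 + η ^ 2 * ‖p - y‖ ^ 2)
      ≤ ‖l - m‖ ^ 2 + η ^ 2 * ‖y - a‖ ^ 2 := by
  have e1 : l + η • q - m = (l - m) + η • q := by abel
  have e2 : y - a = (p - a) - (p - y) := by abel
  rw [e1, e2, norm_add_sq_real, norm_sub_sq_real (p - a) (p - y), inner_smul_right, norm_smul,
    mul_pow, Real.norm_eq_abs, sq_abs]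
  simp only [inner_add_left, inner_add_right, inner_smul_left, conj_trivial, h1, h2, h3,
    real_inner_self_eq_norm_sq] at hmono
  rw [real_inner_comm (p - y) (p - a)]
  nlinarith

/-- Theorem 2 (global convergence): every limit point `(u^∞, λ^∞)` of the decoupled
augmented Lagrangian iterates satisfies `(I − P)u^∞ = 0` and
`0 ∈ ∂E(u^∞) + (I − P)λ^∞`, and the whole sequence converges to it. -/
theorem stmt_7 {V : Type*} [NormedAddCommGroup V] [InnerProductSpace ℝ V]
    [FiniteDimensional ℝ V] (E : V → ℝ)
    (hE : ConvexOn ℝ Set.univ E)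
    (hlsc : LowerSemicontinuous E)
    (P : V →ₗ[ℝ] V) (hidem : P ∘ₗ P = P)
    (hsym : ∀ x y : V, ⟪P x, y⟫ = ⟪x, P y⟫)
    (η : ℝ) (hη : 0 < η)
    (ustar lamstar : V)
    (hfeas : ustar - P ustar = 0)
    (hsaddle : ∀ u : V, E ustar ≤ E u + ⟪(u - ustar) - P (u - ustar), lamstar⟫)
    (u lam : ℕ → V)
    (hmin : ∀ n : ℕ, ∀ v : V,
      E (u (n + 1)) + ⟪u (n + 1), lam n⟫ + η / 2 * ‖u (n + 1) - P (u n)‖ ^ 2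
        ≤ E v + ⟪v, lam n⟫ + η / 2 * ‖v - P (u n)‖ ^ 2)
    (hlam : ∀ n : ℕ, lam (n + 1) = lam n + η • (u (n + 1) - P (u (n + 1))))
    (hlam0 : lam 0 ∈ (LinearMap.ker (LinearMap.id - P))ᗮ) :
    ∀ uinf laminf : V,
      MapClusterPt (uinf, laminf) atTop (fun n : ℕ => (u n, lam n)) →
        (uinf - P uinf = 0 ∧
        -- 0 ∈ ∂E(u^∞) + (I − P)λ^∞, i.e. −(I − P)λ^∞ ∈ ∂E(u^∞)
        (∀ v : V, E uinf + ⟪-(laminf - P laminf), v - uinf⟫ ≤ E v) ∧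
        Tendsto (fun n : ℕ => (u n, lam n)) atTop (𝓝 (uinf, laminf))) := by
  intro uinf laminf hcl
  have hP2 : ∀ x, P (P x) = P x := fun x => LinearMap.congr_fun hidem x
  have hPc : Continuous P := P.continuous_of_finiteDimensional
  have hEc : Continuous E := by
    rw [← continuousOn_univ]; exact hE.continuousOn isOpen_univ
  have hlamP : ∀ n, P (lam n) = 0 := by
    intro n
    induction n with
    | zero =>
      have h := (Submodule.mem_orthogonal _ _).1 hlam0 (P (lam 0)) (by simp [hP2])
      rw [hsym, ← hP2, ← hsym] at h
      exact inner_self_eq_zero.1 h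
    | succ n ih => simp [hlam, ih, hP2]
  have horth : ∀ w z : V, P w = 0 → ⟪w, P z⟫ = 0 := fun w z hw => by
    rw [← hsym, hw, inner_zero_left]
  have hsub : ∀ n v, E (u (n + 1)) + ⟪-(lam n + η • (u (n + 1) - P (u n))), v - u (n + 1)⟫ ≤ E v :=
    fun n => subgradient_of_argmin hE (hmin n)
  have hstep : ∀ a m : V, P a = a → P m = 0 → (∀ v, E a + ⟪-m, v - a⟫ ≤ E v) → ∀ n,
      ‖lam (n + 1) - m‖ ^ 2 + η ^ 2 * ‖P (u (n + 1)) - a‖ ^ 2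
        + (‖η • (u (n + 1) - P (u (n + 1)))‖ ^ 2 + η ^ 2 * ‖P (u (n + 1)) - P (u n)‖ ^ 2)
      ≤ ‖lam n - m‖ ^ 2 + η ^ 2 * ‖P (u n) - a‖ ^ 2 := by
    intro a m ha hm hcrit n
    rw [hlam]
    have hpa : P (u (n + 1)) - a = P (u (n + 1) - a) := by rw [map_sub, ha]
    apply lyapunov_step hη
    · rw [hpa]; exact horth _ _ (by simp [hlamP, hm])
    · rw [hpa]; exact horth _ _ (by simp [hP2])
    · rw [← map_sub, real_inner_comm]; exact horth _ _ (by simp [hP2])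
    · have h1 := hsub n a
      have h2 := hcrit (u (n + 1))
      have e1 : lam n - m + η • (u (n + 1) - P (u (n + 1)) + (P (u (n + 1)) - P (u n)))
          = (lam n + η • (u (n + 1) - P (u n))) - m := by module
      have e2 : u (n + 1) - P (u (n + 1)) + (P (u (n + 1)) - a) = u (n + 1) - a := by abel
      rw [e1, e2, inner_sub_left]
      rw [← neg_sub (u (n + 1)) a, inner_neg_neg] at h1
      rw [inner_neg_left] at h2
      linarith
  have hanti : ∀ a m : V, P a = a → P m = 0 → (∀ v, E a + ⟪-m, v - a⟫ ≤ E v) →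
      Antitone fun n => ‖lam n - m‖ ^ 2 + η ^ 2 * ‖P (u n) - a‖ ^ 2 := by
    intro a m ha hm hcrit
    refine antitone_nat_of_succ_le fun n => ?_
    have := hstep a m ha hm hcrit n
    have : 0 ≤ ‖η • (u (n + 1) - P (u (n + 1)))‖ ^ 2 + η ^ 2 * ‖P (u (n + 1)) - P (u n)‖ ^ 2 := by
      positivity
    linarith
  -- The decrease of the Lyapunov functional at the given saddle point forces the increments to 0.
  have hinc : Tendsto (fun n => ‖η • (u (n + 1) - P (u (n + 1)))‖ ^ 2
      + η ^ 2 * ‖P (u (n + 1)) - P (u n)‖ ^ 2) atTop (𝓝 0) := by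
    have ha : P ustar = ustar := (sub_eq_zero.1 hfeas).symm
    have hm : P (lamstar - P lamstar) = 0 := by simp [hP2]
    have hcrit : ∀ v, E ustar + ⟪-(lamstar - P lamstar), v - ustar⟫ ≤ E v := by
      intro v
      have h := hsaddle v
      rw [inner_sub_left, hsym, ← inner_sub_right, real_inner_comm] at h
      rw [inner_neg_left]
      linarith
    obtain ⟨L, hL⟩ : ∃ L, Tendsto
        (fun n => ‖lam n - (lamstar - P lamstar)‖ ^ 2 + η ^ 2 * ‖P (u n) - ustar‖ ^ 2)
        atTop (𝓝 L) :=
      ⟨_, tendsto_atTop_ciInf (hanti _ _ ha hm hcrit)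
        ⟨0, by rintro _ ⟨n, rfl⟩; dsimp only; positivity⟩⟩
    have hd := hL.sub (hL.comp (tendsto_add_atTop_nat 1))
    rw [sub_self] at hd
    refine squeeze_zero (fun n => by positivity) (fun n => ?_) hd
    have := hstep _ _ ha hm hcrit n
    simp only [Function.comp_apply]
    linarith
  have hQ' : Tendsto (fun n => η • (u (n + 1) - P (u (n + 1)))) atTop (𝓝 0) :=
    tendsto_zero_of_norm_sq_le hinc fun n => le_add_of_nonneg_right (by positivity)
  have hQ : Tendsto (fun n => u n - P (u n)) atTop (𝓝 0) := by
    rw [← tendsto_add_atTop_iff_nat 1]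
    simpa [smul_smul, inv_mul_cancel₀ hη.ne'] using hQ'.const_smul η⁻¹
  have hD : Tendsto (fun n => η • (P (u (n + 1)) - P (u n))) atTop (𝓝 0) := by
    refine tendsto_zero_of_norm_sq_le hinc fun n => ?_
    rw [norm_smul, mul_pow, Real.norm_eq_abs, sq_abs]
    exact le_add_of_nonneg_left (by positivity)
  obtain ⟨ψ, hψ, hlim⟩ := hcl.tendsto_subseq
  have hu : Tendsto (fun k => u (ψ k)) atTop (𝓝 uinf) := (continuous_fst.tendsto _).comp hlim
  have hl : Tendsto (fun k => lam (ψ k)) atTop (𝓝 laminf) := (continuous_snd.tendsto _).comp hlim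
  have hfeasinf : uinf - P uinf = 0 :=
    tendsto_nhds_unique (hu.sub ((hPc.tendsto _).comp hu)) (hQ.comp hψ.tendsto_atTop)
  have hPl : P laminf = 0 := by
    refine tendsto_nhds_unique ((hPc.tendsto _).comp hl) ?_
    simp [Function.comp_def, hlamP]
  have hPu : P uinf = uinf := (sub_eq_zero.1 hfeasinf).symm
  have hcrit : ∀ v, E uinf + ⟪-laminf, v - uinf⟫ ≤ E v := by
    intro v
    -- The subgradient at `u⁽ⁿ⁺¹⁾` is `-λ⁽ⁿ⁺¹⁾` up to a vanishing increment.
    have hsub' : ∀ n, E (u (n + 1)) +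
        ⟪-(lam (n + 1) + η • (P (u (n + 1)) - P (u n))), v - u (n + 1)⟫ ≤ E v := by
      intro n
      convert hsub n v using 4
      rw [hlam]; module
    have hD' : Tendsto (fun n => η • (P (u n) - P (u (n - 1)))) atTop (𝓝 0) := by
      rw [← tendsto_add_atTop_iff_nat 1]; simpa using hD
    have hT := ((hEc.tendsto _).comp hu).add
      (((hl.add (hD'.comp hψ.tendsto_atTop)).neg).inner (𝕜 := ℝ) (tendsto_const_nhds.sub hu)
        (x := -(laminf + 0)) (y := v - uinf))
    rw [add_zero] at hT
    refine le_of_tendsto hT ?_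
    filter_upwards [hψ.tendsto_atTop.eventually_ge_atTop 1] with k hk
    obtain ⟨n, hn⟩ := Nat.exists_eq_add_of_le' hk
    simpa [hn] using hsub' n
  refine ⟨hfeasinf, by simpa [hPl] using hcrit, ?_⟩
  have hΦ : Tendsto (fun n => ‖lam n - laminf‖ ^ 2 + η ^ 2 * ‖P (u n) - uinf‖ ^ 2)
      atTop (𝓝 0) := by
    refine (tendsto_iff_tendsto_subseq_of_antitone (hanti _ _ hPu hPl hcrit)
      hψ.tendsto_atTop).2 ?_
    have h := ((hl.sub_const laminf).norm.pow 2).add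
      (((((hPc.tendsto _).comp hu).sub_const uinf).norm.pow 2).const_mul (η ^ 2))
    simpa [hPu, Function.comp_def] using h
  have hlam_lim : Tendsto lam atTop (𝓝 laminf) :=
    tendsto_sub_nhds_zero_iff.1 <|
      tendsto_zero_of_norm_sq_le hΦ fun n => le_add_of_nonneg_right (by positivity)
  have hPu_lim : Tendsto (fun n => P (u n)) atTop (𝓝 uinf) := by
    have h : Tendsto (fun n => η • (P (u n) - uinf)) atTop (𝓝 0) := by
      refine tendsto_zero_of_norm_sq_le hΦ fun n => ?_
      rw [norm_smul, mul_pow, Real.norm_eq_abs, sq_abs]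
      exact le_add_of_nonneg_left (by positivity)
    refine tendsto_sub_nhds_zero_iff.1 ?_
    simpa [smul_smul, inv_mul_cancel₀ hη.ne'] using h.const_smul η⁻¹
  have hu_lim : Tendsto u atTop (𝓝 uinf) := by
    simpa using hQ.add hPu_lim
  exact hu_lim.prodMk_nhds hlam_lim
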